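/- For every real number α with 1 < α ≤ 2 and every real θ, the series ∑_{s∈ℤ} c^α_s e^{i s θ} converges absolutely and its sum equals |2 sin(θ/2)|^α. -/

import Mathlib

/-- Fractional centered-difference coefficients
`c^α_s = (-1)^s Γ(α+1) / (Γ(α/2 − s + 1) · Γ(α/2 + s + 1))`.
(In Lean, division by zero is zero, matching the stated convention.) -/
noncomputable def cCoef (α : ℝ) (s : ℤ) : ℝ :=
  ((-1 : ℝ) ^ s) * Real.Gamma (α + 1) /
    (Real.Gamma (α / 2 - s + 1) * Real.Gamma (α / 2 + s + 1))

/-!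
The coefficients satisfy `(α/2 + s + 1) c_{s+1} = -(α/2 - s) c_s`. Integrating the derivative of
`e^{i(s+1/2)t} (2 sin (t/2))^(α+1)` over `[0, 2π]` gives the same recurrence for the Fourier
coefficients of `|2 sin (t/2)|^α`, and the two sequences agree at `s = 0` by Euler's Beta integral
and Legendre's duplication formula. The recurrence also makes `(s + α/2) |c_s|` telescope to
`α |c_s|` for large `s`, so the coefficients are summable and the Fourier series of the continuous
function `|2 sin (t/2)|^α` converges to it everywhere.
-/

open Real Set MeasureTheory
open ProbabilityTheory (beta)

section Sequences

lemma summable_of_le_sub_succ {a b : ℕ → ℝ} (ha : ∀ n, 0 ≤ a n) (hb : ∀ n, 0 ≤ b n)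
    (hab : ∀ n, a n ≤ b n - b (n + 1)) : Summable a :=
  summable_of_sum_range_le ha fun n => calc
    ∑ i ∈ Finset.range n, a i ≤ ∑ i ∈ Finset.range n, (b i - b (i + 1)) :=
      Finset.sum_le_sum fun i _ => hab i
    _ = b 0 - b n := Finset.sum_range_sub' b n
    _ ≤ b 0 := sub_le_self _ (hb n)

lemma eq_of_mul_add_one_eq_mul {M : Type*} [MulZeroClass M] [IsLeftCancelMulZero M]
    {p q u v : ℤ → M} (hp : ∀ n, 0 ≤ n → p n ≠ 0) (hq : ∀ n < 0, q n ≠ 0)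
    (hu : ∀ n, p n * u (n + 1) = q n * u n) (hv : ∀ n, p n * v (n + 1) = q n * v n)
    (h₀ : u 0 = v 0) (n : ℤ) : u n = v n := by
  induction n using Int.induction_on with
  | zero => exact h₀
  | succ n ih => exact mul_left_cancel₀ (hp n n.cast_nonneg) (by rw [hu, hv, ih])
  | pred n ih =>
    refine mul_left_cancel₀ (hq (-n - 1) (by lia)) ?_
    rw [← hu, ← hv, sub_add_cancel, ih]

end Sequences

section Coefficients

lemma inv_Gamma_eq_self_mul_inv_Gamma_add_one (x : ℝ) :
    (Gamma x)⁻¹ = x * (Gamma (x + 1))⁻¹ := by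
  have h := Complex.one_div_Gamma_eq_self_mul_one_div_Gamma_add_one x
  rw [← Complex.ofReal_one, ← Complex.ofReal_add, Complex.Gamma_ofReal, Complex.Gamma_ofReal] at h
  exact_mod_cast h

lemma cCoef_zero (α : ℝ) : cCoef α 0 = Gamma (α + 1) / Gamma (α / 2 + 1) ^ 2 := by
  simp [cCoef, sq]

lemma cCoef_neg (α : ℝ) (s : ℤ) : cCoef α (-s) = cCoef α s := by
  simp only [cCoef, zpow_neg, ← inv_zpow, inv_neg_one, Int.cast_neg, sub_neg_eq_add,
    ← sub_eq_add_neg]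
  rw [mul_comm (Gamma (α / 2 + s + 1))]

lemma cCoef_add_one (α : ℝ) (s : ℤ) :
    (α / 2 + s + 1) * cCoef α (s + 1) = -(α / 2 - s) * cCoef α s := by
  have h₁ := inv_Gamma_eq_self_mul_inv_Gamma_add_one (α / 2 - s)
  have h₂ := inv_Gamma_eq_self_mul_inv_Gamma_add_one (α / 2 + s + 1)
  have e₁ : α / 2 - ((s + 1 : ℤ) : ℝ) + 1 = α / 2 - s := by push_cast; ring
  have e₂ : α / 2 + ((s + 1 : ℤ) : ℝ) + 1 = α / 2 + s + 1 + 1 := by push_cast; ring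
  simp only [cCoef, e₁, e₂, div_eq_mul_inv _ (_ * _), mul_inv]
  rw [h₁, h₂, zpow_add_one₀ (by norm_num)]
  ring

lemma mul_abs_cCoef_eq_sub {α : ℝ} (hα : 0 ≤ α) {s : ℤ} (hs : α / 2 ≤ s) :
    α * |cCoef α s| =
      (s + α / 2) * |cCoef α s| - ((s + 1 : ℤ) + α / 2) * |cCoef α (s + 1)| := by
  have h := congrArg abs (cCoef_add_one α s)
  rw [abs_mul, abs_mul, abs_of_nonneg (a := α / 2 + s + 1) (by linarith),
    abs_of_nonneg (a := -(α / 2 - s)) (by linarith)] at h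
  push_cast
  linear_combination h

lemma summable_cCoef {α : ℝ} (hα : 0 < α) : Summable (cCoef α) := by
  obtain ⟨N, hN⟩ := exists_nat_ge (α / 2)
  have hle (n : ℕ) : α / 2 ≤ ((n + N : ℕ) : ℤ) := by
    push_cast
    linarith [n.cast_nonneg (α := ℝ)]
  have htail : Summable fun n : ℕ => α * |cCoef α (n + N : ℕ)| :=
    summable_of_le_sub_succ (b := fun n => ((n + N : ℕ) + α / 2) * |cCoef α (n + N : ℕ)|)
      (fun n => by positivity) (fun n => by positivity) fun n => by
        have h := mul_abs_cCoef_eq_sub hα.le (hle n)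
        rw [← Nat.cast_succ, Nat.succ_eq_add_one, add_right_comm n N 1] at h
        exact h.le
  have hnat : Summable fun n : ℕ => cCoef α n :=
    (summable_nat_add_iff N).1 ((summable_mul_left_iff hα.ne').1 htail).of_abs
  exact hnat.of_nat_of_neg (by simpa only [cCoef_neg] using hnat)

end Coefficients

section Beta

lemma integral_rpow_mul_one_sub_rpow {u v : ℝ} (hu : 0 < u) (hv : 0 < v) :
    ∫ x in (0 : ℝ)..1, x ^ (u - 1) * (1 - x) ^ (v - 1) = beta u v := by
  have h : Complex.betaIntegral u v =
      ((∫ x in (0 : ℝ)..1, x ^ (u - 1) * (1 - x) ^ (v - 1) : ℝ) : ℂ) := by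
    rw [Complex.betaIntegral, ← intervalIntegral.integral_ofReal]
    refine intervalIntegral.integral_congr fun x hx => ?_
    rw [uIcc_of_le zero_le_one] at hx
    push_cast [Complex.ofReal_cpow hx.1, Complex.ofReal_cpow (sub_nonneg.2 hx.2)]
    rfl
  rw [ProbabilityTheory.beta_eq_betaIntegralReal u v hu hv, h, Complex.ofReal_re]

lemma bijOn_sin_sq : BijOn (fun t => sin t ^ 2) (Ioo 0 (π / 2)) (Ioo 0 1) := by
  have hpos {t : ℝ} (ht : t ∈ Ioo 0 (π / 2)) : 0 < sin t :=
    sin_pos_of_pos_of_lt_pi ht.1 (by linarith [ht.2, pi_pos])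
  refine InvOn.bijOn (f' := fun x => arcsin √x) ⟨fun t ht => ?_, fun x hx => ?_⟩
    (fun t ht => ⟨pow_pos (hpos ht) 2, ?_⟩) (fun x hx => ⟨?_, ?_⟩)
  · simp only [sqrt_sq (hpos ht).le]
    exact arcsin_sin (by linarith [ht.1, pi_pos]) ht.2.le
  · have h : √x ≤ 1 := sqrt_le_one.2 hx.2.le
    simp only [sin_arcsin (by linarith [sqrt_nonneg x]) h, sq_sqrt hx.1.le]
  · have hcos : 0 < cos t := cos_pos_of_mem_Ioo ⟨by linarith [ht.1, pi_pos], ht.2⟩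
    nlinarith [sin_sq_add_cos_sq t]
  · exact arcsin_pos.2 (sqrt_pos.2 hx.1)
  · exact arcsin_lt_pi_div_two.2 ((sqrt_lt_sqrt hx.1.le hx.2).trans_eq sqrt_one)

lemma integral_sin_rpow_mul_cos_rpow {u v : ℝ} (hu : 0 < u) (hv : 0 < v) :
    ∫ t in (0 : ℝ)..π / 2, sin t ^ (2 * u - 1) * cos t ^ (2 * v - 1) = beta u v / 2 := by
  have hderiv (t : ℝ) (_ : t ∈ Ioo 0 (π / 2)) :
      HasDerivWithinAt (fun t => sin t ^ 2) (2 * sin t * cos t) (Ioo 0 (π / 2)) t := by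
    simpa using ((hasDerivAt_sin t).fun_pow 2).hasDerivWithinAt
  have hsubst := integral_image_eq_integral_abs_deriv_smul measurableSet_Ioo hderiv
    bijOn_sin_sq.injOn fun x => x ^ (u - 1) * (1 - x) ^ (v - 1)
  have hintegrand (t : ℝ) (ht : t ∈ Ioo 0 (π / 2)) :
      |2 * sin t * cos t| • ((sin t ^ 2) ^ (u - 1) * (1 - sin t ^ 2) ^ (v - 1)) =
        2 * (sin t ^ (2 * u - 1) * cos t ^ (2 * v - 1)) := by
    have hs : 0 < sin t := sin_pos_of_pos_of_lt_pi ht.1 (by linarith [ht.2, pi_pos])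
    have hc : 0 < cos t := cos_pos_of_mem_Ioo ⟨by linarith [ht.1, pi_pos], ht.2⟩
    have hrpow {x : ℝ} (hx : 0 < x) (w : ℝ) : x * (x ^ 2) ^ (w - 1) = x ^ (2 * w - 1) := by
      rw [← rpow_two, ← rpow_mul hx.le, mul_comm, ← rpow_add_one hx.ne']
      congr 1
      ring
    rw [abs_of_pos (by positivity), ← cos_sq', ← hrpow hs, ← hrpow hc, smul_eq_mul]
    ring
  rw [bijOn_sin_sq.image_eq, setIntegral_congr_fun measurableSet_Ioo hintegrand,
    integral_const_mul, ← integral_Ioc_eq_integral_Ioo, ← integral_Ioc_eq_integral_Ioo,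
    ← intervalIntegral.integral_of_le zero_le_one,
    ← intervalIntegral.integral_of_le (by positivity),
    integral_rpow_mul_one_sub_rpow hu hv] at hsubst
  linarith

lemma integral_sin_rpow {a : ℝ} (ha : -1 < a) :
    ∫ t in (0 : ℝ)..π, sin t ^ a = 2 ^ a * beta ((a + 1) / 2) ((a + 1) / 2) := by
  have hdouble := intervalIntegral.mul_integral_comp_mul_left
    (a := 0) (b := π / 2) (f := fun t => sin t ^ a) 2
  have hbeta := integral_sin_rpow_mul_cos_rpow (u := (a + 1) / 2) (v := (a + 1) / 2)
    (by linarith) (by linarith)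
  rw [mul_zero, mul_div_cancel₀ π two_ne_zero] at hdouble
  rw [mul_div_cancel₀ (a + 1) two_ne_zero, add_sub_cancel_right] at hbeta
  rw [← hdouble, mul_comm (2 ^ a), ← mul_div_cancel₀ (beta _ _) two_ne_zero, ← hbeta, mul_assoc]
  congr 1
  rw [← intervalIntegral.integral_mul_const]
  refine intervalIntegral.integral_congr fun t ht => ?_
  rw [uIcc_of_le (by positivity)] at ht
  have hs : 0 ≤ sin t := sin_nonneg_of_nonneg_of_le_pi ht.1 (by linarith [ht.2, pi_pos])
  have hc : 0 ≤ cos t := cos_nonneg_of_mem_Icc ⟨by linarith [ht.1, pi_pos], ht.2⟩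
  simp only [sin_two_mul]
  rw [mul_rpow (by positivity) hc, mul_rpow zero_le_two hs]
  ring

lemma four_rpow_mul_beta_self {a : ℝ} (ha : -1 < a) :
    4 ^ a * beta ((a + 1) / 2) ((a + 1) / 2) = π * (Gamma (a + 1) / Gamma (a / 2 + 1) ^ 2) := by
  have hdup : Gamma ((a + 1) / 2) * Gamma (a / 2 + 1) = Gamma (a + 1) * (2 ^ a)⁻¹ * √π := by
    have h := Gamma_mul_Gamma_add_half ((a + 1) / 2)
    rwa [show (a + 1) / 2 + 1 / 2 = a / 2 + 1 by ring, show 2 * ((a + 1) / 2) = a + 1 by ring,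
      show 1 - (a + 1) = -a by ring, rpow_neg zero_le_two] at h
  have hg : Gamma (a / 2 + 1) ≠ 0 := (Gamma_pos_of_pos (by linarith)).ne'
  have hg' : Gamma (a + 1) ≠ 0 := (Gamma_pos_of_pos (by linarith)).ne'
  have h4 : (4 : ℝ) ^ a = 2 ^ a * 2 ^ a := by
    rw [← mul_rpow zero_le_two zero_le_two]; norm_num
  rw [ProbabilityTheory.beta, add_halves, eq_div_of_mul_eq hg hdup, h4]
  field_simp
  rw [sq_sqrt pi_pos.le]

end Beta

section Moments

/-- The `n`-th trigonometric moment of `(2 sin (t/2))^α` over a period. The base is nonnegative on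
`[0, 2π]`, so this is `2π` times the Fourier coefficient of `|2 sin (t/2)|^α` of index `-n`. -/
noncomputable def sinMoment (α : ℝ) (n : ℤ) : ℂ :=
  ∫ t in (0 : ℝ)..2 * π, Complex.exp (Complex.I * n * t) * ((2 * sin (t / 2)) ^ α : ℝ)

lemma two_mul_sin_half_nonneg {t : ℝ} (ht : t ∈ uIcc 0 (2 * π)) : 0 ≤ 2 * sin (t / 2) := by
  rw [uIcc_of_le two_pi_pos.le] at ht
  have := sin_nonneg_of_nonneg_of_le_pi (x := t / 2) (by linarith [ht.1]) (by linarith [ht.2])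
  positivity

lemma sinMoment_zero {α : ℝ} (hα : -1 < α) : sinMoment α 0 = 2 * π * cCoef α 0 := by
  have hreal : ∫ t in (0 : ℝ)..2 * π, (2 * sin (t / 2)) ^ α = 2 * π * cCoef α 0 := calc
    _ = ∫ t in (0 : ℝ)..2 * π, 2 ^ α * sin (t / 2) ^ α := by
      refine intervalIntegral.integral_congr fun t ht => mul_rpow zero_le_two ?_
      linarith [two_mul_sin_half_nonneg ht]
    _ = 2 * ((2 ^ α * 2 ^ α) * beta ((α + 1) / 2) ((α + 1) / 2)) := by
      rw [intervalIntegral.integral_const_mul,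
        intervalIntegral.integral_comp_div (fun t => sin t ^ α) two_ne_zero, zero_div,
        mul_div_cancel_left₀ π two_ne_zero, integral_sin_rpow hα, smul_eq_mul]
      ring
    _ = 2 * (4 ^ α * beta ((α + 1) / 2) ((α + 1) / 2)) := by
      rw [← mul_rpow zero_le_two zero_le_two]; norm_num
    _ = 2 * π * cCoef α 0 := by rw [four_rpow_mul_beta_self hα, cCoef_zero, mul_assoc]
  simp only [sinMoment, Int.cast_zero, mul_zero, zero_mul, Complex.exp_zero, one_mul]
  rw [intervalIntegral.integral_ofReal, hreal]
  push_cast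
  rfl

lemma hasDerivAt_exp_mul_two_mul_sin_half_rpow {α : ℝ} (hα : 0 ≤ α) (n : ℤ) {t : ℝ}
    (ht : 0 ≤ 2 * sin (t / 2)) :
    HasDerivAt (fun t : ℝ =>
        Complex.exp (Complex.I * (n + 1 / 2) * t) * ((2 * sin (t / 2)) ^ (α + 1) : ℝ))
      (((α / 2 + n + 1 : ℝ) : ℂ) *
          (Complex.exp (Complex.I * (n + 1 : ℤ) * t) * ((2 * sin (t / 2)) ^ α : ℝ)) +
        ((α / 2 - n : ℝ) : ℂ) *
          (Complex.exp (Complex.I * n * t) * ((2 * sin (t / 2)) ^ α : ℝ))) t := by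
  have hexp : HasDerivAt (fun t : ℝ => Complex.exp (Complex.I * (n + 1 / 2) * t))
      (Complex.exp (Complex.I * (n + 1 / 2) * t) * (Complex.I * (n + 1 / 2))) t := by
    simpa using ((hasDerivAt_id (t : ℂ)).const_mul (Complex.I * (n + 1 / 2))).cexp.comp_ofReal
  have hsin : HasDerivAt (fun t : ℝ => 2 * sin (t / 2)) (cos (t / 2)) t := by
    refine (((hasDerivAt_id t).div_const 2).sin.const_mul 2).congr_deriv ?_
    simp only [id_eq]
    ring
  have hrpow := (hsin.rpow_const (p := α + 1) (Or.inr (by linarith))).ofReal_comp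
  refine (hexp.mul hrpow).congr_deriv ?_
  have e₁ : Complex.exp (Complex.I * (n + 1 : ℤ) * t) =
      Complex.exp (Complex.I * (n + 1 / 2) * t) * Complex.exp ((t / 2) * Complex.I) := by
    rw [← Complex.exp_add]; congr 1; push_cast; ring
  have e₂ : Complex.exp (Complex.I * n * t) =
      Complex.exp (Complex.I * (n + 1 / 2) * t) * Complex.exp (-(t / 2) * Complex.I) := by
    rw [← Complex.exp_add]; congr 1; ring
  rw [e₁, e₂, Complex.exp_mul_I, Complex.exp_mul_I, Complex.cos_neg, Complex.sin_neg,
    add_sub_cancel_right, rpow_add_one' ht (by linarith)]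
  push_cast
  ring

lemma sinMoment_add_one {α : ℝ} (hα : 0 ≤ α) (n : ℤ) :
    ((α / 2 + n + 1 : ℝ) : ℂ) * sinMoment α (n + 1) =
      ((-(α / 2 - n) : ℝ) : ℂ) * sinMoment α n := by
  have hint (c : ℂ) (m : ℤ) : IntervalIntegrable (fun t : ℝ =>
      c * (Complex.exp (Complex.I * m * t) * ((2 * sin (t / 2)) ^ α : ℝ))) volume 0 (2 * π) := by
    have : Continuous fun t : ℝ => (2 * sin (t / 2)) ^ α :=
      Continuous.rpow_const (by fun_prop) fun _ => Or.inr hα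
    exact Continuous.intervalIntegrable (by fun_prop) _ _
  have h := intervalIntegral.integral_eq_sub_of_hasDerivAt
    (fun t ht => hasDerivAt_exp_mul_two_mul_sin_half_rpow hα n (two_mul_sin_half_nonneg ht))
    ((hint _ (n + 1)).add (hint _ n))
  rw [intervalIntegral.integral_add (hint _ _) (hint _ _), intervalIntegral.integral_const_mul,
    intervalIntegral.integral_const_mul, ← sinMoment, ← sinMoment,
    mul_div_cancel_left₀ π two_ne_zero, zero_div, sin_pi, sin_zero, mul_zero,
    zero_rpow (by linarith), Complex.ofReal_zero, mul_zero, mul_zero, sub_zero] at h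
  rw [Complex.ofReal_neg]
  linear_combination h

lemma sinMoment_eq_two_pi_mul_cCoef {α : ℝ} (hα : 0 ≤ α) (n : ℤ) :
    sinMoment α n = 2 * π * cCoef α n := by
  refine eq_of_mul_add_one_eq_mul (p := fun n => ((α / 2 + n + 1 : ℝ) : ℂ))
    (q := fun n => ((-(α / 2 - n) : ℝ) : ℂ)) (v := fun n => 2 * π * cCoef α n)
    (fun n hn => ?_) (fun n hn => ?_) (sinMoment_add_one hα) (fun n => ?_)
    (sinMoment_zero (by linarith)) n
  · have : (0 : ℝ) ≤ n := Int.cast_nonneg hn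
    exact Complex.ofReal_ne_zero.2 (by positivity)
  · have : (n : ℝ) < 0 := Int.cast_lt_zero.2 hn
    exact Complex.ofReal_ne_zero.2 (by linarith)
  · have h := congrArg ((↑) : ℝ → ℂ) (cCoef_add_one α n)
    rw [Complex.ofReal_mul, Complex.ofReal_mul] at h
    linear_combination 2 * (π : ℂ) * h

end Moments

section FourierSeries

lemma hasSum_fourierCoeff_lift_mul_fourier {T : ℝ} [Fact (0 < T)] {f : ℝ → ℂ}
    (hf : Continuous f) (hper : Function.Periodic f T) (hsum : Summable (fourierCoeff hper.lift))
    (x : ℝ) :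
    HasSum (fun n => fourierCoeff hper.lift n * fourier n (x : AddCircle T)) (f x) :=
  has_pointwise_sum_fourier_series_of_summable
    (f := ⟨hper.lift, continuous_coinduced_dom.mpr hf⟩) hsum x

local instance fact_two_pi_pos : Fact (0 < 2 * π) := ⟨two_pi_pos⟩

lemma fourier_two_pi_coe (n : ℤ) (t : ℝ) :
    fourier n (t : AddCircle (2 * π)) = Complex.exp (Complex.I * n * t) := by
  rw [fourier_coe_apply]
  congr 1
  have : (π : ℂ) ≠ 0 := Complex.ofReal_ne_zero.2 pi_ne_zero
  push_cast
  field_simp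

lemma periodic_abs_two_mul_sin_half_rpow (α : ℝ) :
    Function.Periodic (fun t : ℝ => ((|2 * sin (t / 2)| ^ α : ℝ) : ℂ)) (2 * π) := fun t => by
  simp [add_div, sin_add_pi]

lemma fourierCoeff_abs_two_mul_sin_half_rpow {α : ℝ} (hα : 0 ≤ α) (n : ℤ) :
    fourierCoeff (periodic_abs_two_mul_sin_half_rpow α).lift n = cCoef α n := by
  have hmoment : ∫ t in (0 : ℝ)..2 * π, fourier (-n) (t : AddCircle (2 * π)) •
      (periodic_abs_two_mul_sin_half_rpow α).lift (t : AddCircle (2 * π)) =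
        sinMoment α (-n) := by
    refine intervalIntegral.integral_congr fun t ht => ?_
    simp only [fourier_two_pi_coe, Function.Periodic.lift_coe,
      abs_of_nonneg (two_mul_sin_half_nonneg ht), smul_eq_mul]
  rw [fourierCoeff_eq_intervalIntegral _ n 0, zero_add, hmoment, sinMoment_eq_two_pi_mul_cCoef hα,
    cCoef_neg, Complex.real_smul]
  have : (π : ℂ) ≠ 0 := Complex.ofReal_ne_zero.2 pi_ne_zero
  push_cast
  field_simp

theorem generating_function_of_cCoef_general (α : ℝ) (hα : 0 < α) (θ : ℝ) :
    Summable (fun s : ℤ => ‖(cCoef α s : ℂ) * Complex.exp (Complex.I * s * θ)‖) ∧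
    ∑' s : ℤ, (cCoef α s : ℂ) * Complex.exp (Complex.I * s * θ) =
      ((|2 * Real.sin (θ / 2)| ^ α : ℝ) : ℂ) := by
  have hcoeff := fourierCoeff_abs_two_mul_sin_half_rpow hα.le
  have hcont : Continuous fun t : ℝ => ((|2 * sin (t / 2)| ^ α : ℝ) : ℂ) :=
    Complex.continuous_ofReal.comp
      (Continuous.rpow_const (by fun_prop) fun _ => Or.inr hα.le)
  have hsum : Summable (fourierCoeff (periodic_abs_two_mul_sin_half_rpow α).lift) := by
    rw [funext hcoeff]
    exact Complex.ofRealCLM.summable (summable_cCoef hα)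
  have h := hasSum_fourierCoeff_lift_mul_fourier hcont _ hsum θ
  simp only [hcoeff, fourier_two_pi_coe] at h
  exact ⟨h.summable.norm, h.tsum_eq⟩

end FourierSeries

/-- For `1 < α ≤ 2` and every real `θ`, the series `∑_{s ∈ ℤ} c^α_s e^{i s θ}`
converges absolutely and its sum equals `|2 sin(θ/2)|^α`. -/
theorem generating_function_of_cCoef (α : ℝ) (hα₁ : 1 < α) (hα₂ : α ≤ 2) (θ : ℝ) :
    Summable (fun s : ℤ => ‖(cCoef α s : ℂ) * Complex.exp (Complex.I * s * θ)‖) ∧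
    ∑' s : ℤ, (cCoef α s : ℂ) * Complex.exp (Complex.I * s * θ) =
      ((|2 * Real.sin (θ / 2)| ^ α : ℝ) : ℂ) :=
  generating_function_of_cCoef_general α (zero_lt_one.trans hα₁) θ
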